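/- arXiv:2304.02500 — 2 statements merged into one kernel-verified Lean document; each statement's English description precedes it below -/
import Mathlib

section
/- Let r > 0, η > 0, s ∈ ℝ^K, and p = q_r(s). Then for a vector p̃ ∈ P with all components strictly positive, p̃ = q_r(s + η · c(p)) if and only if for every w ∈ W and every p' ∈ P, ∑_{k ∈ K_w} (log p_k − log p̃_k)(p'_k − p̃_k) ≤ r η · ∑_{k ∈ K_w} c_k(p)(p'_k − p̃_k). -/
open Finset Filter Topology

/-! Up to an additive constant on each OD pair, `log q_r(s + g)` is `log q_r(s) - r g`, and
constants are invisible to differences of strategies. With `q = q_r(s + η c(p))` the inequality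
therefore reads `∑ k ∈ K_w, (log q_k - log p̃_k) (p'_k - p̃_k) ≤ 0`. At `p' = q` every summand is
nonnegative by monotonicity of `log`, so all of them vanish and `p̃ = q`. -/

section StrictMono

variable {ι κ R : Type*} [Ring R] [LinearOrder R] [IsStrictOrderedRing R]
  {f : R → R} {S : Set R}

theorem sum_sub_mul_sub_nonpos_iff_eqOn (hf : StrictMonoOn f S) {t : Finset ι} {x y : ι → R}
    (hx : Set.MapsTo x t S) (hy : Set.MapsTo y t S) :
    ∑ i ∈ t, (f (x i) - f (y i)) * (x i - y i) ≤ 0 ↔ Set.EqOn x y t := by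
  have hnonneg : ∀ i ∈ t, 0 ≤ (f (x i) - f (y i)) * (x i - y i) := fun i hi =>
    (hf.monotoneOn.monovaryOn monotoneOn_id).sub_mul_sub_nonneg (hy hi) (hx hi)
  rw [(sum_nonneg hnonneg).ge_iff_eq', sum_eq_zero_iff_of_nonneg hnonneg]
  refine forall₂_congr fun i hi => ?_
  rw [mul_eq_zero, sub_eq_zero, sub_eq_zero, hf.injOn.eq_iff (hx hi) (hy hi), or_self]

theorem eq_iff_forall_fiber_sum_sub_mul_sub_nonpos [Fintype ι] [DecidableEq κ] (ω : ι → κ)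
    (hf : StrictMonoOn f S) {P : Set (ι → R)} {x y : ι → R} (hyP : y ∈ P)
    (hx : ∀ i, x i ∈ S) (hy : ∀ i, y i ∈ S) :
    x = y ↔ ∀ j, ∀ z ∈ P, ∑ i with ω i = j, (f (y i) - f (x i)) * (z i - x i) ≤ 0 := by
  constructor
  · rintro rfl j z -
    simp
  · intro h
    funext i
    have heqOn := (sum_sub_mul_sub_nonpos_iff_eqOn hf (fun k _ => hy k) fun k _ => hx k).1
      (h (ω i) y hyP)
    exact (heqOn (by simp)).symm

end StrictMono

section Logit

variable {W K : Type*} [Fintype K] [DecidableEq W]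

/-- The strategy set `P`, a product of simplices: nonnegative route shares that add up to one over
the routes of each OD pair. -/
def strategySet (ω : K → W) : Set (K → ℝ) :=
  {p | (∀ k, 0 ≤ p k) ∧ ∀ w, ∑ k with ω k = w, p k = 1}

/-- The normalizing constant of the logit choice at the OD pair `w`. -/
noncomputable def logitPartition (ω : K → W) (r : ℝ) (s : K → ℝ) (w : W) : ℝ :=
  ∑ k with ω k = w, Real.exp (-r * s k)

/-- The logit choice `q_r(s)`: on each OD pair, the Gibbs distribution with energy `s` and inverse
temperature `r`. -/
noncomputable def logitChoice (ω : K → W) (r : ℝ) (s : K → ℝ) (k : K) : ℝ :=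
  Real.exp (-r * s k) / logitPartition ω r s (ω k)

variable {ω : K → W} {p p' : K → ℝ}

theorem surjective_of_mem_strategySet (hp : p ∈ strategySet ω) : Function.Surjective ω := by
  intro w
  have hsum : ∑ k with ω k = w, p k ≠ 0 := by simp [hp.2 w]
  obtain ⟨k, hk, -⟩ := exists_ne_zero_of_sum_ne_zero hsum
  exact ⟨k, (mem_filter.1 hk).2⟩

theorem fiber_sum_sub_eq_zero (hp : p ∈ strategySet ω) (hp' : p' ∈ strategySet ω) (w : W) :
    ∑ k with ω k = w, (p' k - p k) = 0 := by
  rw [sum_sub_distrib, hp.2, hp'.2, sub_self]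

variable (ω) (r : ℝ) (s : K → ℝ)

theorem logitPartition_apply_pos (k : K) : 0 < logitPartition ω r s (ω k) :=
  sum_pos (fun _ _ => Real.exp_pos _) ⟨k, by simp⟩

theorem logitChoice_pos (k : K) : 0 < logitChoice ω r s k :=
  div_pos (Real.exp_pos _) (logitPartition_apply_pos ω r s k)

theorem logitChoice_mem_strategySet (hω : Function.Surjective ω) :
    logitChoice ω r s ∈ strategySet ω := by
  refine ⟨fun k => (logitChoice_pos ω r s k).le, hω.forall.2 fun k₀ => ?_⟩
  calc ∑ k with ω k = ω k₀, logitChoice ω r s k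
      = ∑ k with ω k = ω k₀, Real.exp (-r * s k) / logitPartition ω r s (ω k₀) :=
        sum_congr rfl fun k hk => by rw [logitChoice, (mem_filter.1 hk).2]
    _ = logitPartition ω r s (ω k₀) / logitPartition ω r s (ω k₀) := (sum_div ..).symm
    _ = 1 := div_self (logitPartition_apply_pos ω r s k₀).ne'

theorem log_logitChoice (k : K) :
    Real.log (logitChoice ω r s k) = -r * s k - Real.log (logitPartition ω r s (ω k)) := by
  rw [logitChoice, Real.log_div (Real.exp_pos _).ne' (logitPartition_apply_pos ω r s k).ne',
    Real.log_exp]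

theorem fiber_sum_log_logitChoice_mul {w : W} {v : K → ℝ} (hv : ∑ k with ω k = w, v k = 0) :
    ∑ k with ω k = w, Real.log (logitChoice ω r s k) * v k = -r * ∑ k with ω k = w, s k * v k := by
  calc ∑ k with ω k = w, Real.log (logitChoice ω r s k) * v k
      = ∑ k with ω k = w, (-r * (s k * v k) - Real.log (logitPartition ω r s w) * v k) :=
        sum_congr rfl fun k hk => by rw [log_logitChoice, (mem_filter.1 hk).2]; ring
    _ = -r * ∑ k with ω k = w, s k * v k := by
        rw [sum_sub_distrib, ← mul_sum, ← mul_sum, hv, mul_zero, sub_zero]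

theorem fiber_sum_log_logitChoice_add_mul (g : K → ℝ) {w : W} {v : K → ℝ}
    (hv : ∑ k with ω k = w, v k = 0) :
    ∑ k with ω k = w, Real.log (logitChoice ω r (s + g) k) * v k =
      ∑ k with ω k = w, Real.log (logitChoice ω r s k) * v k -
        r * ∑ k with ω k = w, g k * v k := by
  simp only [fiber_sum_log_logitChoice_mul ω r _ hv, Pi.add_apply, add_mul, sum_add_distrib]
  ring

theorem stmt_4_general (η : ℝ) (g : K → ℝ) (hp : p ∈ strategySet ω) (hpos : ∀ k, 0 < p k) :
    p = logitChoice ω r (s + η • g) ↔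
      ∀ w, ∀ p' ∈ strategySet ω,
        ∑ k with ω k = w, (Real.log (logitChoice ω r s k) - Real.log (p k)) * (p' k - p k) ≤
          r * η * ∑ k with ω k = w, g k * (p' k - p k) := by
  have hmem : logitChoice ω r (s + η • g) ∈ strategySet ω :=
    logitChoice_mem_strategySet ω r _ (surjective_of_mem_strategySet hp)
  rw [eq_iff_forall_fiber_sum_sub_mul_sub_nonpos ω Real.strictMonoOn_log hmem hpos
    (logitChoice_pos ω r _)]
  refine forall₃_congr fun w p' hp' => ?_
  have hshift := fiber_sum_log_logitChoice_add_mul ω r s (η • g) (fiber_sum_sub_eq_zero hp hp' w)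
  simp only [Pi.smul_apply, smul_eq_mul, mul_assoc η, ← mul_sum, ← mul_assoc r] at hshift
  simp only [sub_mul _ (Real.log _), sum_sub_distrib, hshift]
  rw [sub_right_comm, sub_nonpos]

end Logit

theorem stmt_4
    {W K E : Type*} [Fintype W] [Fintype K] [Fintype E]
    [DecidableEq W] [DecidableEq E]
    [Nonempty W] [Nonempty K]
    (ω : K → W) (hω : Function.Surjective ω)
    (Λ : E → K → ℝ) (hΛ : ∀ e k, Λ e k = 0 ∨ Λ e k = 1)
    (d : W → ℝ) (hd : ∀ w, 0 < d w)
    (u : (E → ℝ) → (E → ℝ))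
    (P : Set (K → ℝ))
    (hP : P = {p : K → ℝ | (∀ k, 0 ≤ p k) ∧
      ∀ w, ∑ k ∈ Finset.univ.filter (fun k => ω k = w), p k = 1})
    (Λbar : E → K → ℝ) (hΛbar : ∀ e k, Λbar e k = d (ω k) * Λ e k)
    (c : (K → ℝ) → K → ℝ)
    (hc : ∀ p k, c p k = ∑ e, Λ e k * u (fun e' => ∑ k', Λbar e' k' * p k') e)
    (q : ℝ → (K → ℝ) → K → ℝ)
    (hq : ∀ (rr : ℝ) (ss : K → ℝ) (k : K),
      q rr ss k = Real.exp (-rr * ss k) /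
        ∑ k' ∈ Finset.univ.filter (fun k' => ω k' = ω k), Real.exp (-rr * ss k'))
    (r : ℝ) (hr : 0 < r) (η : ℝ) (hη : 0 < η)
    (sv : K → ℝ) (pv : K → ℝ) (hpv : pv = q r sv)
    (ptil : K → ℝ) (hptil : ptil ∈ P) (hpos : ∀ k, 0 < ptil k) :
    ptil = q r (fun k => sv k + η * c pv k) ↔
      ∀ w : W, ∀ pp ∈ P,
        ∑ k ∈ Finset.univ.filter (fun k => ω k = w),
            (Real.log (pv k) - Real.log (ptil k)) * (pp k - ptil k)
          ≤ r * η * ∑ k ∈ Finset.univ.filter (fun k => ω k = w), c pv k * (pp k - ptil k) := by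
  obtain rfl : q = logitChoice ω := by ext rr ss k; exact hq rr ss k
  subst hP hpv
  exact stmt_4_general ω r sv η (c (logitChoice ω r sv)) hptil hpos
end

section
/- Under Assumptions 1 and 2, suppose the initial valuation satisfies s^0 ∈ ℝ^K (all entries finite) and the step sizes satisfy lim_{t→∞} η^t = 0 and lim_{t→∞} ∑_{i=0}^t η^i = ∞. Then the CumLog sequence p^t converges (in ℝ^K) to a point p* belonging to P*. -/
open Finset Filter Topology

/-!
The CumLog dynamics is entropic mirror descent for the route costs: in terms of route flows, a step
multiplies every flow by the exponential of minus the scaled route cost and renormalises within the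
OD pairs.

If `A` and `A²` have positive semidefinite symmetric part, then `|A v|² ≤ |(A + Aᵀ) v|²` is bounded
by a multiple of `⟪A v, v⟫`; hence the route cost is cocoercive on the compact set of route flows.
Vanishing regret of the weighted averages gives an equilibrium `a` to start from. Along the
dynamics, the divergence from an equilibrium to the current flow decreases by the step size times
the gap `⟪c (f), f - a⟫`, up to an error quadratic in the step size. Cocoercivity and Wardrop's
condition at the equilibrium bound that error by the gap as well, so the divergence is eventually
nonincreasing and, the step sizes being not summable, the gap gets arbitrarily small. By
cocoercivity a cluster point with zero gap is itself an equilibrium. The divergence from this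
cluster point is eventually nonincreasing too and vanishes along a subsequence, so it tends to zero.
-/

open scoped Matrix RealInnerProductSpace

section PositiveOperators

variable {H : Type*} [NormedAddCommGroup H] [InnerProductSpace ℝ H]

lemma norm_apply_sq_le_of_isPositive {S : H →L[ℝ] H} (hS : S.IsPositive) (v : H) :
    ‖S v‖ ^ 2 ≤ ‖S‖ * ⟪S v, v⟫ := by
  rcases eq_or_ne S 0 with rfl | hS0
  · simp
  have hnorm : 0 < ‖S‖ := norm_pos_iff.2 hS0
  have hquad : 0 ≤ ⟪S (‖S‖ • v - S v), ‖S‖ • v - S v⟫ := hS.inner_nonneg_left _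
  have hexpand : ⟪S (‖S‖ • v - S v), ‖S‖ • v - S v⟫
      = ‖S‖ * (‖S‖ * ⟪S v, v⟫) - 2 * ‖S‖ * ‖S v‖ ^ 2 + ⟪S (S v), S v⟫ := by
    simp only [map_sub, map_smul, inner_sub_left, inner_sub_right, real_inner_smul_left,
      real_inner_smul_right, hS.inner_left_eq_inner_right (S v) v, real_inner_self_eq_norm_sq]
    ring
  have hcauchy : ⟪S (S v), S v⟫ ≤ ‖S‖ * ‖S v‖ ^ 2 :=
    calc ⟪S (S v), S v⟫ ≤ ‖S (S v)‖ * ‖S v‖ := real_inner_le_norm _ _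
      _ ≤ ‖S‖ * ‖S v‖ * ‖S v‖ := by gcongr; exact S.le_opNorm _
      _ = ‖S‖ * ‖S v‖ ^ 2 := by ring
  have hfactor : 0 ≤ ‖S‖ * (‖S‖ * ⟪S v, v⟫ - ‖S v‖ ^ 2) := by linarith
  linarith [nonneg_of_mul_nonneg_right hfactor hnorm]

lemma norm_apply_sq_le_of_inner_nonneg [CompleteSpace H] {A : H →L[ℝ] H}
    (hA : ∀ v, 0 ≤ ⟪A v, v⟫) (hA2 : ∀ v, 0 ≤ ⟪A (A v), v⟫) (v : H) :
    ‖A v‖ ^ 2 ≤ 4 * ‖A‖ * ⟪A v, v⟫ := by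
  set S : H →L[ℝ] H := A + A.adjoint with hS
  have hinner (w : H) : ⟪S w, w⟫ = 2 * ⟪A w, w⟫ := by
    rw [hS, add_apply, inner_add_left, A.adjoint_inner_left,
      real_inner_comm (A w) w]
    ring
  have hSpos : S.IsPositive := (S.isPositive_iff').2
    ⟨by simp [hS, IsSelfAdjoint, ContinuousLinearMap.star_eq_adjoint, add_comm],
      fun w => by rw [hinner]; linarith [hA w]⟩
  have hSnorm : ‖S‖ ≤ 2 * ‖A‖ := by
    calc ‖S‖ ≤ ‖A‖ + ‖A.adjoint‖ := norm_add_le _ _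
      _ = 2 * ‖A‖ := by rw [LinearIsometryEquiv.norm_map]; ring
  have hcross : 0 ≤ ⟪A v, A.adjoint v⟫ := by
    rw [A.adjoint_inner_right]
    exact hA2 v
  calc ‖A v‖ ^ 2 ≤ ‖S v‖ ^ 2 := by
        rw [hS, add_apply, norm_add_sq_real]
        nlinarith [sq_nonneg ‖A.adjoint v‖]
    _ ≤ ‖S‖ * ⟪S v, v⟫ := norm_apply_sq_le_of_isPositive hSpos v
    _ ≤ 2 * ‖A‖ * ⟪S v, v⟫ := by gcongr; exact hSpos.inner_nonneg_left v
    _ = 4 * ‖A‖ * ⟪A v, v⟫ := by rw [hinner]; ring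

end PositiveOperators

section Cocoercive

variable {ι κ : Type*} [Fintype ι] [Fintype κ]

/-- `g` is `β`-cocoercive on `S` for the Euclidean structure of `ι → ℝ`, which is written with `⬝ᵥ`
because the norm of `ι → ℝ` is the supremum norm. -/
def CocoerciveOn (β : ℝ) (g : (ι → ℝ) → ι → ℝ) (S : Set (ι → ℝ)) : Prop :=
  ∀ x ∈ S, ∀ y ∈ S, β * ((g x - g y) ⬝ᵥ (g x - g y)) ≤ (g x - g y) ⬝ᵥ (x - y)

lemma dotProduct_self_nonneg_real (v : ι → ℝ) : 0 ≤ v ⬝ᵥ v := by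
  simpa using dotProduct_self_star_nonneg v

lemma dotProduct_self_smul_sub (c : ℝ) (v w : ι → ℝ) :
    (c • v - w) ⬝ᵥ (c • v - w) = c ^ 2 * (v ⬝ᵥ v) - 2 * c * (v ⬝ᵥ w) + w ⬝ᵥ w := by
  simp only [sub_dotProduct, dotProduct_sub, smul_dotProduct, dotProduct_smul, smul_eq_mul,
    dotProduct_comm w v]
  ring

lemma sq_apply_le_dotProduct_self (v : ι → ℝ) (i : ι) : v i ^ 2 ≤ v ⬝ᵥ v := by
  rw [sq]
  exact single_le_sum (f := fun j => v j * v j) (fun _ _ => mul_self_nonneg _) (mem_univ i)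

namespace CocoerciveOn

variable {β : ℝ} {g : (ι → ℝ) → ι → ℝ} {S : Set (ι → ℝ)} {x y : ι → ℝ}

lemma dotProduct_nonneg (hg : CocoerciveOn β g S) (hβ : 0 ≤ β) (hx : x ∈ S) (hy : y ∈ S) :
    0 ≤ (g x - g y) ⬝ᵥ (x - y) :=
  (mul_nonneg hβ (dotProduct_self_nonneg_real _)).trans (hg x hx y hy)

lemma sq_sub_le (hg : CocoerciveOn β g S) (hβ : 0 < β) (hx : x ∈ S) (hy : y ∈ S) (i : ι) :
    (g x i - g y i) ^ 2 ≤ β⁻¹ * ((g x - g y) ⬝ᵥ (x - y)) := by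
  rw [le_inv_mul_iff₀ hβ]
  exact (mul_le_mul_of_nonneg_left (sq_apply_le_dotProduct_self (g x - g y) i) hβ.le).trans
    (hg x hx y hy)

lemma eq_of_dotProduct_nonpos (hg : CocoerciveOn β g S) (hβ : 0 < β) (hx : x ∈ S) (hy : y ∈ S)
    (h : (g x - g y) ⬝ᵥ (x - y) ≤ 0) : g x = g y := by
  ext i
  have hsq : (g x i - g y i) ^ 2 ≤ 0 :=
    (hg.sq_sub_le hβ hx hy i).trans (mul_nonpos_of_nonneg_of_nonpos (inv_nonneg.2 hβ.le) h)
  exact sub_eq_zero.1 (pow_eq_zero_iff two_ne_zero |>.1 (le_antisymm hsq (sq_nonneg _)))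

lemma continuousOn (hg : CocoerciveOn β g S) (hβ : 0 < β) : ContinuousOn g S := by
  intro x hx
  have hlip : ∀ y ∈ S, (g y - g x) ⬝ᵥ (g y - g x) ≤ β⁻¹ ^ 2 * ((y - x) ⬝ᵥ (y - x)) := by
    intro y hy
    have hsq : 0 ≤ (β • (g y - g x) - (y - x)) ⬝ᵥ (β • (g y - g x) - (y - x)) :=
      dotProduct_self_nonneg_real _
    rw [dotProduct_self_smul_sub] at hsq
    rw [inv_pow, le_inv_mul_iff₀ (by positivity)]
    nlinarith [mul_le_mul_of_nonneg_left (hg y hy x hx) hβ.le]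
  have hsqrt : Tendsto (fun y => √(β⁻¹ ^ 2 * ((y - x) ⬝ᵥ (y - x)))) (𝓝[S] x) (𝓝 0) := by
    have hcont : Continuous fun y : ι → ℝ => √(β⁻¹ ^ 2 * ((y - x) ⬝ᵥ (y - x))) := by fun_prop
    simpa using (hcont.tendsto x).mono_left nhdsWithin_le_nhds
  refine tendsto_pi_nhds.2 fun i => tendsto_sub_nhds_zero_iff.1 ?_
  refine squeeze_zero_norm' ?_ hsqrt
  filter_upwards [self_mem_nhdsWithin] with y hy
  exact Real.abs_le_sqrt ((sq_apply_le_dotProduct_self (g y - g x) i).trans (hlip y hy))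

lemma transpose_comp {M : Matrix ι κ ℝ} {β : ℝ} {T : Set (κ → ℝ)}
    (hg : CocoerciveOn β g (M.mulVec '' T)) (hβ : 0 < β) :
    ∃ γ > 0, CocoerciveOn γ (fun x => Mᵀ *ᵥ g (M *ᵥ x)) T := by
  set N : ℝ := ∑ k, ∑ i, M i k ^ 2 + 1 with hN
  have hNpos : 0 < N := by positivity
  have hbound (v : ι → ℝ) : Mᵀ *ᵥ v ⬝ᵥ Mᵀ *ᵥ v ≤ N * (v ⬝ᵥ v) := by
    calc Mᵀ *ᵥ v ⬝ᵥ Mᵀ *ᵥ v = ∑ k, (∑ i, M i k * v i) ^ 2 := by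
          simp only [dotProduct, Matrix.mulVec, Matrix.transpose_apply, sq]
      _ ≤ ∑ k, (∑ i, M i k ^ 2) * ∑ i, v i ^ 2 :=
          sum_le_sum fun k _ => sum_mul_sq_le_sq_mul_sq _ _ _
      _ = (N - 1) * (v ⬝ᵥ v) := by simp only [hN, dotProduct, ← sum_mul, sq]; ring
      _ ≤ N * (v ⬝ᵥ v) := by
          gcongr
          · exact dotProduct_self_nonneg_real v
          · linarith
  refine ⟨β / N, by positivity, fun x hx y hy => ?_⟩
  have hdual (v : ι → ℝ) : Mᵀ *ᵥ v ⬝ᵥ (x - y) = v ⬝ᵥ (M *ᵥ x - M *ᵥ y) := by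
    rw [Matrix.mulVec_transpose, ← Matrix.dotProduct_mulVec, Matrix.mulVec_sub]
  simp only [← Matrix.mulVec_sub, hdual]
  calc β / N * (Mᵀ *ᵥ (g (M *ᵥ x) - g (M *ᵥ y)) ⬝ᵥ Mᵀ *ᵥ (g (M *ᵥ x) - g (M *ᵥ y)))
      ≤ β / N * (N * ((g (M *ᵥ x) - g (M *ᵥ y)) ⬝ᵥ (g (M *ᵥ x) - g (M *ᵥ y)))) := by
        gcongr
        exact hbound _
    _ = β * ((g (M *ᵥ x) - g (M *ᵥ y)) ⬝ᵥ (g (M *ᵥ x) - g (M *ᵥ y))) := by field_simp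
    _ ≤ (g (M *ᵥ x) - g (M *ᵥ y)) ⬝ᵥ (M *ᵥ x - M *ᵥ y) :=
        hg _ (Set.mem_image_of_mem _ hx) _ (Set.mem_image_of_mem _ hy)
    _ = (g (M *ᵥ x) - g (M *ᵥ y)) ⬝ᵥ M *ᵥ (x - y) := by rw [Matrix.mulVec_sub]

-- The mean value theorem is tested against `n = v - 2 * β * D`, where `v = x - y` and
-- `D = g x - g y`, because `A v ⬝ᵥ n ≥ β * (|A v - D|² - |D|²)` for every derivative `A`.
lemma of_hasFDerivWithinAt {β : ℝ} (hβ : 0 ≤ β) {g : (ι → ℝ) → ι → ℝ} {S : Set (ι → ℝ)}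
    {g' : (ι → ℝ) → (ι → ℝ) →L[ℝ] (ι → ℝ)} (hS : Convex ℝ S)
    (hg : ∀ x ∈ S, HasFDerivWithinAt g (g' x) S x)
    (hβg : ∀ x ∈ S, ∀ v, β * (g' x v ⬝ᵥ g' x v) ≤ g' x v ⬝ᵥ v) : CocoerciveOn β g S := by
  intro x hx y hy
  set D := g x - g y
  set n := x - y - (2 * β) • D
  let pair : (ι → ℝ) →L[ℝ] ℝ := (dotProductBilin ℝ ℝ n).toContinuousLinearMap
  obtain ⟨z, hz, hmvt⟩ := domain_mvt
    (fun w hw => pair.hasFDerivAt.comp_hasFDerivWithinAt w (hg w hw)) hS hy hx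
  set a := g' z (x - y)
  have hpair (w : ι → ℝ) : n ⬝ᵥ w = w ⬝ᵥ (x - y) - 2 * β * (w ⬝ᵥ D) := by
    rw [dotProduct_comm, dotProduct_sub, dotProduct_smul, smul_eq_mul]
  have htest : n ⬝ᵥ D = n ⬝ᵥ a := (dotProduct_sub n (g x) (g y)).trans hmvt
  rw [hpair, hpair] at htest
  have ha : β * (a ⬝ᵥ a) ≤ a ⬝ᵥ (x - y) := hβg z (hS.segment_subset hy hx hz) _
  have hsq : 0 ≤ (1 : ℝ) ^ 2 * (a ⬝ᵥ a) - 2 * 1 * (a ⬝ᵥ D) + D ⬝ᵥ D :=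
    dotProduct_self_smul_sub 1 a D ▸ dotProduct_self_nonneg_real _
  linarith [mul_nonneg hβ hsq]

end CocoerciveOn

lemma exists_dotProduct_self_apply_le (ι : Type*) [Fintype ι] :
    ∃ C, 0 ≤ C ∧ ∀ A : (ι → ℝ) →L[ℝ] (ι → ℝ), (∀ v, 0 ≤ A v ⬝ᵥ v) → (∀ v, 0 ≤ A (A v) ⬝ᵥ v) →
      ∀ v, A v ⬝ᵥ A v ≤ C * ‖A‖ * (A v ⬝ᵥ v) := by
  let e : EuclideanSpace ℝ ι ≃L[ℝ] (ι → ℝ) := EuclideanSpace.equiv ι ℝ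
  let i : (ι → ℝ) →L[ℝ] EuclideanSpace ℝ ι := e.symm
  let j : EuclideanSpace ℝ ι →L[ℝ] (ι → ℝ) := e
  refine ⟨4 * (‖i‖ * ‖j‖), by positivity, fun A hA hA2 v => ?_⟩
  let B : EuclideanSpace ℝ ι →L[ℝ] EuclideanSpace ℝ ι := i ∘L A ∘L j
  have hinner (v w : ι → ℝ) : ⟪i v, i w⟫ = v ⬝ᵥ w := by
    rw [dotProduct_comm]
    exact EuclideanSpace.inner_toLp_toLp v w
  have hB (v : ι → ℝ) : B (i v) = i (A v) := rfl
  have hBnorm : ‖B‖ ≤ ‖i‖ * ‖j‖ * ‖A‖ :=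
    calc ‖B‖ ≤ ‖i‖ * ‖A ∘L j‖ := i.opNorm_comp_le _
      _ ≤ ‖i‖ * (‖A‖ * ‖j‖) := by gcongr; exact A.opNorm_comp_le j
      _ = ‖i‖ * ‖j‖ * ‖A‖ := by ring
  have hbound := norm_apply_sq_le_of_inner_nonneg (A := B)
    (fun v => (hA (j v)).trans_eq (hinner _ _).symm)
    (fun v => (hA2 (j v)).trans_eq (hinner _ _).symm) (i v)
  rw [← real_inner_self_eq_norm_sq, hB, hinner, hinner] at hbound
  calc A v ⬝ᵥ A v ≤ 4 * ‖B‖ * (A v ⬝ᵥ v) := hbound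
    _ ≤ 4 * (‖i‖ * ‖j‖ * ‖A‖) * (A v ⬝ᵥ v) := by gcongr; exact hA v
    _ = 4 * (‖i‖ * ‖j‖) * ‖A‖ * (A v ⬝ᵥ v) := by ring

lemma exists_cocoerciveOn_of_fderiv {g : (ι → ℝ) → ι → ℝ} {S U : Set (ι → ℝ)} (hU : IsOpen U)
    (hSU : S ⊆ U) (hg : ContDiffOn ℝ 1 g U) (hSconv : Convex ℝ S) (hScomp : IsCompact S)
    (hpos : ∀ x ∈ S, ∀ v, 0 ≤ fderiv ℝ g x v ⬝ᵥ v)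
    (hpos2 : ∀ x ∈ S, ∀ v, 0 ≤ fderiv ℝ g x (fderiv ℝ g x v) ⬝ᵥ v) :
    ∃ β > 0, CocoerciveOn β g S := by
  obtain ⟨C, hC, hle⟩ := exists_dotProduct_self_apply_le ι
  obtain ⟨M, hM⟩ := hScomp.exists_bound_of_continuousOn
    ((hg.continuousOn_fderiv_of_isOpen hU le_rfl).mono hSU)
  have hderiv (x : ι → ℝ) (hx : x ∈ S) : HasFDerivWithinAt g (fderiv ℝ g x) S x :=
    ((hg.differentiableOn one_ne_zero).differentiableAt
      (hU.mem_nhds (hSU hx))).hasFDerivAt.hasFDerivWithinAt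
  refine ⟨(C * |M| + 1)⁻¹, by positivity, .of_hasFDerivWithinAt (by positivity) hSconv hderiv
    fun x hx v => ?_⟩
  rw [inv_mul_le_iff₀ (by positivity)]
  refine (hle _ (hpos x hx) (hpos2 x hx) v).trans (mul_le_mul_of_nonneg_right ?_ (hpos x hx v))
  calc C * ‖fderiv ℝ g x‖ ≤ C * |M| := by gcongr; exact (hM x hx).trans (le_abs_self M)
    _ ≤ C * |M| + 1 := by linarith

section PartialDerivatives

variable [DecidableEq ι] (A : (ι → ℝ) →L[ℝ] (ι → ℝ))

lemma apply_eq_sum_apply_single (v : ι → ℝ) (i : ι) :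
    A v i = ∑ j, A (Pi.single j 1) i * v j := by
  conv_lhs => rw [pi_eq_sum_univ' v, map_sum]
  simp [mul_comm]

lemma sum_sum_apply_single_eq_dotProduct (v : ι → ℝ) :
    ∑ i, ∑ j, v i * A (Pi.single j 1) i * v j = A v ⬝ᵥ v := by
  simp only [dotProduct, apply_eq_sum_apply_single A v, sum_mul]
  exact sum_congr rfl fun i _ => sum_congr rfl fun j _ => by ring

lemma sum_sum_sum_apply_single_eq_dotProduct (v : ι → ℝ) :
    ∑ i, ∑ j, v i * (∑ m, A (Pi.single m 1) i * A (Pi.single j 1) m) * v j = A (A v) ⬝ᵥ v := by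
  simp only [← apply_eq_sum_apply_single A]
  exact sum_sum_apply_single_eq_dotProduct (A ∘L A) v

end PartialDerivatives

end Cocoercive

section VariationalInequality

variable {κ : Type*} [Fintype κ] {g : (κ → ℝ) → κ → ℝ} {S : Set (κ → ℝ)} {a : κ → ℝ}

/-- `a` solves the (Stampacchia) variational inequality of the operator `g` on `S`. -/
def IsVariationalSolution (g : (κ → ℝ) → κ → ℝ) (S : Set (κ → ℝ)) (a : κ → ℝ) : Prop :=
  a ∈ S ∧ ∀ b ∈ S, 0 ≤ g a ⬝ᵥ (b - a)

-- Minty's argument: test with `a + s • (b - a)` and let `s` tend to `0`.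
lemma isVariationalSolution_of_forall_dotProduct_nonneg (hS : Convex ℝ S)
    (hg : ContinuousOn g S) (ha : a ∈ S) (hmin : ∀ b ∈ S, 0 ≤ g b ⬝ᵥ (b - a)) :
    IsVariationalSolution g S a := by
  refine ⟨ha, fun b hb => ?_⟩
  let segm : ℝ → κ → ℝ := fun s => a + s • (b - a)
  have hmem : ∀ᶠ s in 𝓝[>] (0 : ℝ), 0 < s ∧ segm s ∈ S := by
    filter_upwards [Ioc_mem_nhdsGT zero_lt_one] with s hs
    exact ⟨hs.1, hS.add_smul_sub_mem ha hb ⟨hs.1.le, hs.2⟩⟩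
  have hsegm : Tendsto segm (𝓝[>] 0) (𝓝[S] a) := by
    refine tendsto_nhdsWithin_iff.2 ⟨?_, hmem.mono fun s hs => hs.2⟩
    have hcont : Continuous segm := by fun_prop
    simpa [segm] using (hcont.tendsto 0).mono_left nhdsWithin_le_nhds
  have hlim : Tendsto (fun s => g (segm s) ⬝ᵥ (b - a)) (𝓝[>] 0) (𝓝 (g a ⬝ᵥ (b - a))) :=
    ((continuous_id.dotProduct continuous_const).tendsto (g a)).comp ((hg a ha).tendsto.comp hsegm)
  refine ge_of_tendsto hlim ?_
  filter_upwards [hmem] with s hs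
  have htest : 0 ≤ s * (g (segm s) ⬝ᵥ (b - a)) := by
    simpa only [segm, add_sub_cancel_left, dotProduct_smul, smul_eq_mul] using hmin _ hs.2
  exact nonneg_of_mul_nonneg_right htest hs.1

end VariationalInequality

section FlowPolytope

variable {K W : Type*} [Fintype K] [DecidableEq W] {ω : K → W} {d : W → ℝ} {a b : K → ℝ}

/-- The route flows that serve the demand `d`, where the route `k` serves the OD pair `ω k`. -/
def flowPolytope (ω : K → W) (d : W → ℝ) : Set (K → ℝ) :=
  {f | (∀ k, 0 ≤ f k) ∧ ∀ w, ∑ k with ω k = w, f k = d w}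

lemma apply_le_of_mem_flowPolytope (ha : a ∈ flowPolytope ω d) (k : K) : a k ≤ d (ω k) := by
  rw [← ha.2 (ω k)]
  exact single_le_sum (f := a) (fun j _ => ha.1 j) (by simp)

lemma convex_flowPolytope : Convex ℝ (flowPolytope ω d) := by
  intro a ha b hb s t hs ht hst
  refine ⟨fun k => add_nonneg (mul_nonneg hs (ha.1 k)) (mul_nonneg ht (hb.1 k)), fun w => ?_⟩
  simp only [Pi.add_apply, Pi.smul_apply, smul_eq_mul, sum_add_distrib, ← mul_sum, ha.2 w, hb.2 w]
  rw [← add_mul, hst, one_mul]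

lemma isClosed_flowPolytope : IsClosed (flowPolytope ω d) := by
  simp only [flowPolytope, Set.ofPred_and, Set.ofPred_forall]
  exact (isClosed_iInter fun k => isClosed_le continuous_const (continuous_apply k)).inter
    (isClosed_iInter fun w => isClosed_eq (by fun_prop) continuous_const)

lemma isCompact_flowPolytope : IsCompact (flowPolytope ω d) :=
  (isCompact_Icc (a := (0 : K → ℝ)) (b := d ∘ ω)).of_isClosed_subset isClosed_flowPolytope
    fun _ ha => ⟨ha.1, fun k => apply_le_of_mem_flowPolytope ha k⟩

lemma dotProduct_comp_eq_of_mem_flowPolytope (ha : a ∈ flowPolytope ω d)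
    (hb : b ∈ flowPolytope ω d) (z : W → ℝ) : a ⬝ᵥ (z ∘ ω) = b ⬝ᵥ (z ∘ ω) := by
  have hfiber (f : K → ℝ) (hf : f ∈ flowPolytope ω d) :
      f ⬝ᵥ (z ∘ ω) = ∑ w ∈ univ.image ω, d w * z w := by
    rw [dotProduct, ← sum_fiberwise_of_maps_to (fun k _ => mem_image_of_mem ω (mem_univ k))]
    refine sum_congr rfl fun w _ => ?_
    rw [← hf.2 w, sum_mul]
    exact sum_congr rfl fun k hk => by rw [Function.comp_apply, (mem_filter.1 hk).2]
  rw [hfiber a ha, hfiber b hb]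

lemma sum_eq_of_mem_flowPolytope (ha : a ∈ flowPolytope ω d) (hb : b ∈ flowPolytope ω d) :
    ∑ k, a k = ∑ k, b k := by
  simpa [dotProduct] using dotProduct_comp_eq_of_mem_flowPolytope ha hb 1

lemma sub_comp_dotProduct_sub (ha : a ∈ flowPolytope ω d) (hb : b ∈ flowPolytope ω d)
    (c : K → ℝ) (z : W → ℝ) : (c - z ∘ ω) ⬝ᵥ (b - a) = c ⬝ᵥ (b - a) := by
  rw [sub_dotProduct, dotProduct_sub (z ∘ ω), dotProduct_comm _ a, dotProduct_comm _ b,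
    dotProduct_comp_eq_of_mem_flowPolytope ha hb, sub_self, sub_zero]

/-- Wardrop's condition for the flow `a` under the route costs `c`: every used route of the OD pair
`w` costs `m w`, and no other route is cheaper. -/
structure IsWardropPotential (ω : K → W) (c a : K → ℝ) (m : W → ℝ) : Prop where
  le (k : K) : m (ω k) ≤ c k
  mul_sub_eq_zero (k : K) : a k * (c k - m (ω k)) = 0

lemma exists_mem_flowPolytope_dotProduct_eq_zero (hd : ∀ w, 0 ≤ d w) {c : K → ℝ} {route : W → K}
    (hroute : ∀ w, ω (route w) = w) (hc : ∀ w, c (route w) = 0) :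
    ∃ b ∈ flowPolytope ω d, c ⬝ᵥ b = 0 := by
  classical
  refine ⟨fun k => if route (ω k) = k then d (ω k) else 0, ⟨fun k => ?_, fun w => ?_⟩, ?_⟩
  · dsimp only
    split_ifs
    exacts [hd _, le_rfl]
  · rw [sum_eq_single_of_mem (route w) (by simp [hroute]), hroute, if_pos rfl]
    intro k hk hne
    rw [(mem_filter.1 hk).2, if_neg hne.symm]
  · refine sum_eq_zero fun k _ => ?_
    dsimp only
    split_ifs with hk
    · rw [← hk, hc, zero_mul]
    · exact mul_zero _

lemma IsVariationalSolution.exists_isWardropPotential {g : (K → ℝ) → K → ℝ}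
    (hω : Function.Surjective ω) (ha : IsVariationalSolution g (flowPolytope ω d) a) :
    ∃ m, IsWardropPotential ω (g a) a m := by
  have hmin (w : W) : ∃ k, ω k = w ∧ ∀ j, ω j = w → g a k ≤ g a j := by
    obtain ⟨k, hk, hle⟩ := exists_min_image (univ.filter (ω · = w)) (g a)
      ((hω w).imp fun k hk => by simp [hk])
    exact ⟨k, by simpa using hk, fun j hj => hle j (by simpa using hj)⟩
  choose route hroute hle using hmin
  set m : W → ℝ := fun w => g a (route w) with hm
  have hmle (k : K) : m (ω k) ≤ g a k := hle (ω k) k rfl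
  have hd (w : W) : 0 ≤ d w := ha.1.2 w ▸ sum_nonneg fun k _ => ha.1.1 k
  obtain ⟨b, hb, hzero⟩ := exists_mem_flowPolytope_dotProduct_eq_zero hd hroute
    (c := g a - m ∘ ω) (fun w => by simp [hm, hroute])
  have hterm (k : K) : 0 ≤ a k * (g a k - m (ω k)) :=
    mul_nonneg (ha.1.1 k) (sub_nonneg.2 (hmle k))
  have hsum : ∑ k, a k * (g a k - m (ω k)) ≤ 0 := by
    have htest := ha.2 b hb
    rwa [← sub_comp_dotProduct_sub ha.1 hb (g a) m, dotProduct_sub, hzero, zero_sub,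
      Left.nonneg_neg_iff, dotProduct_comm] at htest
  refine ⟨m, hmle, fun k => ?_⟩
  exact (sum_eq_zero_iff_of_nonneg fun k _ => hterm k).1
    (hsum.antisymm (sum_nonneg fun k _ => hterm k)) k (mem_univ k)

namespace IsWardropPotential

variable {c : K → ℝ} {m : W → ℝ}

lemma sum_mul_sub_eq (hm : IsWardropPotential ω c a m) (ha : a ∈ flowPolytope ω d)
    (hb : b ∈ flowPolytope ω d) : ∑ k, b k * (c k - m (ω k)) = c ⬝ᵥ (b - a) := by
  rw [← sub_comp_dotProduct_sub ha hb c m, dotProduct]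
  refine sum_congr rfl fun k _ => ?_
  simp only [Pi.sub_apply, Function.comp_apply]
  linear_combination hm.mul_sub_eq_zero k

lemma sum_mul_sq_le (hm : IsWardropPotential ω c a m) (ha : a ∈ flowPolytope ω d)
    (hb : b ∈ flowPolytope ω d) :
    ∑ k, b k * (c k - m (ω k)) ^ 2 ≤ (∑ k, (c k - m (ω k))) * (c ⬝ᵥ (b - a)) := by
  rw [← hm.sum_mul_sub_eq ha hb, mul_sum]
  refine sum_le_sum fun k _ => ?_
  have hexcess (j : K) : 0 ≤ c j - m (ω j) := sub_nonneg.2 (hm.le j)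
  have hle : c k - m (ω k) ≤ ∑ j, (c j - m (ω j)) :=
    single_le_sum (f := fun j => c j - m (ω j)) (fun j _ => hexcess j) (mem_univ k)
  nlinarith [mul_nonneg (hb.1 k) (hexcess k)]

lemma isVariationalSolution {g : (K → ℝ) → K → ℝ} (hm : IsWardropPotential ω (g a) a m)
    (ha : a ∈ flowPolytope ω d) : IsVariationalSolution g (flowPolytope ω d) a := by
  refine ⟨ha, fun b hb => ?_⟩
  rw [← hm.sum_mul_sub_eq ha hb]
  exact sum_nonneg fun k _ => mul_nonneg (hb.1 k) (sub_nonneg.2 (hm.le k))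

end IsWardropPotential

end FlowPolytope

section RelativeEntropy

variable {K : Type*} [Fintype K] {a b f f' : K → ℝ}

/-- The Kullback–Leibler divergence of the weights `a` from the weights `b`, whose total mass need
not be one. It is meant for positive `b`: where `b k = 0`, the term is `0` and not `∞`. -/
noncomputable def relEntropy (a b : K → ℝ) : ℝ :=
  ∑ k, a k * Real.log (a k / b k)

lemma sq_sqrt_sub_sqrt_le {x y : ℝ} (hx : 0 ≤ x) (hy : 0 < y) :
    (√x - √y) ^ 2 ≤ x * Real.log (x / y) + y - x := by
  rcases hx.eq_or_lt with rfl | hx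
  · simp [Real.sq_sqrt hy.le]
  have hlog : Real.log (√(y / x)) ≤ √(y / x) - 1 := Real.log_le_sub_one_of_pos (by positivity)
  have hcross : x * √(y / x) = √x * √y := by
    rw [Real.sqrt_div hy.le, mul_div_left_comm, Real.div_sqrt, mul_comm]
  have hinv : Real.log (y / x) = -Real.log (x / y) := by rw [← Real.log_inv, inv_div]
  rw [Real.log_sqrt (by positivity), hinv] at hlog
  nlinarith [mul_le_mul_of_nonneg_left hlog hx.le, Real.sq_sqrt hx.le, Real.sq_sqrt hy.le]

lemma sum_sq_sqrt_sub_sqrt_le_relEntropy (ha : ∀ k, 0 ≤ a k) (hb : ∀ k, 0 < b k)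
    (hab : ∑ k, a k = ∑ k, b k) : ∑ k, (√(a k) - √(b k)) ^ 2 ≤ relEntropy a b :=
  calc ∑ k, (√(a k) - √(b k)) ^ 2 ≤ ∑ k, (a k * Real.log (a k / b k) + b k - a k) :=
        sum_le_sum fun k _ => sq_sqrt_sub_sqrt_le (ha k) (hb k)
    _ = relEntropy a b := by
        rw [sum_sub_distrib, sum_add_distrib, hab, add_sub_cancel_right, relEntropy]

lemma relEntropy_nonneg (ha : ∀ k, 0 ≤ a k) (hb : ∀ k, 0 < b k) (hab : ∑ k, a k = ∑ k, b k) :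
    0 ≤ relEntropy a b :=
  (sum_nonneg fun _ _ => sq_nonneg _).trans (sum_sq_sqrt_sub_sqrt_le_relEntropy ha hb hab)

lemma relEntropy_self (a : K → ℝ) : relEntropy a a = 0 :=
  sum_eq_zero fun k _ => by rcases eq_or_ne (a k) 0 with hk | hk <;> simp [hk]

lemma tendsto_relEntropy_zero {α : Type*} {l : Filter α} {f : α → K → ℝ}
    (hf : Tendsto f l (𝓝 a)) : Tendsto (fun t => relEntropy a (f t)) l (𝓝 0) := by
  rw [← relEntropy_self a]
  refine tendsto_finsetSum _ fun k _ => ?_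
  rcases eq_or_ne (a k) 0 with hk | hk
  · simp only [hk, zero_mul]
    exact tendsto_const_nhds
  exact ((tendsto_const_nhds.div (tendsto_pi_nhds.1 hf k) hk).log (div_ne_zero hk hk)).const_mul _

lemma tendsto_of_tendsto_relEntropy_zero {α : Type*} {l : Filter α} {f : α → K → ℝ}
    (ha : ∀ k, 0 ≤ a k) (hf : ∀ t k, 0 < f t k) (hsum : ∀ t, ∑ k, a k = ∑ k, f t k)
    (hlim : Tendsto (fun t => relEntropy a (f t)) l (𝓝 0)) : Tendsto f l (𝓝 a) := by
  refine tendsto_pi_nhds.2 fun k => ?_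
  have hle (t : α) : (√(f t k) - √(a k)) ^ 2 ≤ relEntropy a (f t) := by
    rw [sub_sq_comm]
    exact (single_le_sum (f := fun k => (√(a k) - √(f t k)) ^ 2) (fun _ _ => sq_nonneg _)
      (mem_univ k)).trans (sum_sq_sqrt_sub_sqrt_le_relEntropy ha (hf t) (hsum t))
  have hsqrt : Tendsto (fun t => √(f t k)) l (𝓝 √(a k)) := by
    refine tendsto_sub_nhds_zero_iff.1 (squeeze_zero_norm (fun t => Real.abs_le_sqrt (hle t)) ?_)
    simpa using hlim.sqrt
  simpa only [Real.sq_sqrt (ha k), Real.sq_sqrt (hf _ k).le] using hsqrt.pow 2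

lemma relEntropy_mul_exp (a x : K → ℝ) (hf : ∀ k, f k ≠ 0)
    (hf' : ∀ k, f' k = f k * Real.exp (x k)) : relEntropy a f' = relEntropy a f - a ⬝ᵥ x := by
  rw [relEntropy, relEntropy, dotProduct, ← sum_sub_distrib]
  refine sum_congr rfl fun k _ => ?_
  rcases eq_or_ne (a k) 0 with hk | hk
  · simp [hk]
  rw [hf', ← div_div, Real.log_div (div_ne_zero hk (hf k)) (Real.exp_ne_zero _), Real.log_exp,
    mul_sub]

end RelativeEntropy

section ExponentialTilt

variable {K W : Type*} {y a f f' : K → ℝ} {ω : K → W}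

/-- `f'` is obtained from `f` by one multiplicative-weights step with loss `y`: each `f k` is
multiplied by `exp (-y k)` and rescaled within its OD pair by `exp z`. The factor is left free: the
demand fixes it once both flows belong to the same `flowPolytope`. -/
def IsExpTilt (ω : K → W) (y f f' : K → ℝ) : Prop :=
  ∃ z : W → ℝ, ∀ k, f' k = f k * Real.exp (z (ω k) - y k)

variable [Fintype K] [DecidableEq W] {d : W → ℝ}

namespace IsExpTilt

lemma relEntropy_eq (h : IsExpTilt ω y f f') (hf : ∀ k, f k ≠ 0) (ha : a ∈ flowPolytope ω d)
    (hfd : f ∈ flowPolytope ω d) :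
    relEntropy a f' = relEntropy a f - y ⬝ᵥ (f - a) + relEntropy f f' := by
  obtain ⟨z, hz⟩ := h
  rw [relEntropy_mul_exp a (z ∘ ω - y) hf hz, relEntropy_mul_exp f (z ∘ ω - y) hf hz,
    relEntropy_self, dotProduct_sub, dotProduct_sub, dotProduct_sub, dotProduct_comm y,
    dotProduct_comm y, dotProduct_comp_eq_of_mem_flowPolytope ha hfd]
  ring

lemma relEntropy_le (h : IsExpTilt ω y f f') (hf : ∀ k, 0 < f k) (hfd : f ∈ flowPolytope ω d)
    (hfd' : f' ∈ flowPolytope ω d) {m : W → ℝ} (hm : ∀ k, |y k - m (ω k)| ≤ 1) :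
    relEntropy f f' ≤ ∑ k, f k * (y k - m (ω k)) ^ 2 := by
  obtain ⟨z, hz⟩ := h
  have hquad (k : K) : Real.exp (-(y k - m (ω k))) ≤ 1 - (y k - m (ω k)) + (y k - m (ω k)) ^ 2 := by
    have hexp := (abs_le.1 (Real.abs_exp_sub_one_sub_id_le (x := -(y k - m (ω k)))
      (by rw [abs_neg]; exact hm k))).2
    linarith [neg_sq (y k - m (ω k))]
  have htilt (k : K) : f' k * Real.exp (m (ω k) - z (ω k)) = f k * Real.exp (-(y k - m (ω k))) := by
    rw [hz, mul_assoc, ← Real.exp_add]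
    ring_nf
  have hnormaliser : f ⬝ᵥ ((m - z) ∘ ω) ≤ ∑ k, f k * (-(y k - m (ω k)) + (y k - m (ω k)) ^ 2) :=
    calc f ⬝ᵥ ((m - z) ∘ ω) = ∑ k, f' k * (m (ω k) - z (ω k)) :=
          dotProduct_comp_eq_of_mem_flowPolytope hfd hfd' _
      _ ≤ ∑ k, (f' k * Real.exp (m (ω k) - z (ω k)) - f' k) := sum_le_sum fun k _ => by
          nlinarith [hfd'.1 k, Real.add_one_le_exp (m (ω k) - z (ω k))]
      _ = ∑ k, (f k * Real.exp (-(y k - m (ω k))) - f k) := by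
          simp only [htilt, sum_sub_distrib, sum_eq_of_mem_flowPolytope hfd hfd']
      _ ≤ ∑ k, f k * (-(y k - m (ω k)) + (y k - m (ω k)) ^ 2) := sum_le_sum fun k _ => by
          nlinarith [hf k, hquad k]
  calc relEntropy f f' = f ⬝ᵥ ((m - z) ∘ ω) + ∑ k, f k * (y k - m (ω k)) := by
        rw [relEntropy_mul_exp f (z ∘ ω - y) (fun k => (hf k).ne') hz, relEntropy_self, dotProduct,
          dotProduct, zero_sub, ← sum_neg_distrib, ← sum_add_distrib]
        refine sum_congr rfl fun k _ => ?_
        simp only [Pi.sub_apply, Function.comp_apply]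
        ring
    _ ≤ ∑ k, f k * (y k - m (ω k)) ^ 2 := by
        refine (add_le_add_left hnormaliser _).trans_eq ?_
        rw [← sum_add_distrib]
        exact sum_congr rfl fun k _ => by ring

end IsExpTilt

/-- The flow of the demand `d` under logit choice with utilities `v`. -/
noncomputable def logitFlow (ω : K → W) (d : W → ℝ) (v : K → ℝ) (k : K) : ℝ :=
  d (ω k) * (Real.exp (v k) / ∑ k' with ω k' = ω k, Real.exp (v k'))

lemma sum_exp_pos (v : K → ℝ) (k : K) : 0 < ∑ k' with ω k' = ω k, Real.exp (v k') :=
  sum_pos (fun _ _ => Real.exp_pos _) ⟨k, by simp⟩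

lemma logitFlow_pos (hd : ∀ w, 0 < d w) (v : K → ℝ) (k : K) : 0 < logitFlow ω d v k :=
  mul_pos (hd _) (div_pos (Real.exp_pos _) (sum_exp_pos v k))

lemma logitFlow_mem_flowPolytope (hω : Function.Surjective ω) (hd : ∀ w, 0 < d w) (v : K → ℝ) :
    logitFlow ω d v ∈ flowPolytope ω d := by
  refine ⟨fun k => (logitFlow_pos hd v k).le, fun w => ?_⟩
  obtain ⟨k, rfl⟩ := hω w
  calc ∑ j with ω j = ω k, logitFlow ω d v j
      = ∑ j with ω j = ω k, d (ω k) * (Real.exp (v j) / ∑ i with ω i = ω k, Real.exp (v i)) :=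
        sum_congr rfl fun j hj => by rw [logitFlow, (mem_filter.1 hj).2]
    _ = d (ω k) := by rw [← mul_sum, ← sum_div, div_self (sum_exp_pos v k).ne', mul_one]

lemma isExpTilt_logitFlow (v y : K → ℝ) :
    IsExpTilt ω y (logitFlow ω d v) (logitFlow ω d (v - y)) := by
  refine ⟨fun w => Real.log ((∑ k with ω k = w, Real.exp (v k)) /
    ∑ k with ω k = w, Real.exp ((v - y) k)), fun k => ?_⟩
  have hv := sum_exp_pos (ω := ω) v k
  have hvy := sum_exp_pos (ω := ω) (v - y) k
  rw [Real.exp_sub, Real.exp_log (div_pos hv hvy), logitFlow, logitFlow, Pi.sub_apply, Real.exp_sub]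
  field_simp

end ExponentialTilt

section DescentSequences

variable {V gap h : ℕ → ℝ}

lemma frequently_lt_of_eventually_descent (hV : ∀ t, 0 ≤ V t) (hh : ∀ t, 0 ≤ h t)
    (hsum : Tendsto (fun n => ∑ t ∈ range n, h t) atTop atTop)
    (hdesc : ∀ᶠ t in atTop, V (t + 1) ≤ V t - h t * gap t) {ε : ℝ} (hε : 0 < ε) :
    ∃ᶠ t in atTop, gap t < ε := by
  intro hgap
  obtain ⟨N, hN⟩ := eventually_atTop.1 (hdesc.and hgap)
  let potential : ℕ → ℝ := fun n => V n + ε * ∑ t ∈ range n, h t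
  have hanti : AntitoneOn potential (Set.Ici N) := antitoneOn_nat_Ici_of_succ_le fun t ht => by
    have hle : h t * ε ≤ h t * gap t := mul_le_mul_of_nonneg_left (not_lt.1 (hN t ht).2) (hh t)
    simp only [potential, sum_range_succ]
    linarith [(hN t ht).1]
  obtain ⟨n, hn, hlarge⟩ := ((eventually_ge_atTop N).and
    ((hsum.const_mul_atTop hε).eventually_gt_atTop (potential N))).exists
  have hle : potential n ≤ potential N := hanti Set.self_mem_Ici hn hn
  exact (hlarge.trans_le (le_add_of_nonneg_left (hV n))).not_ge hle

lemma tendsto_of_eventually_succ_le_of_subseq {c : ℝ} {φ : ℕ → ℕ}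
    (hV : ∀ᶠ t in atTop, V (t + 1) ≤ V t) (hφ : Tendsto φ atTop atTop)
    (hlim : Tendsto (fun n => V (φ n)) atTop (𝓝 c)) : Tendsto V atTop (𝓝 c) := by
  obtain ⟨N, hN⟩ := eventually_atTop.1 hV
  have hanti : Antitone fun t => V (t + N) :=
    antitone_nat_of_succ_le fun t => by simpa [add_right_comm] using hN (t + N) (by omega)
  refine (tendsto_add_atTop_iff_nat N).1 ((tendsto_iff_tendsto_subseq_of_antitone hanti
    ((tendsto_sub_atTop_nat N).comp hφ)).2 (hlim.congr' ?_))
  filter_upwards [hφ.eventually_ge_atTop N] with n hn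
  simp [Nat.sub_add_cancel hn]

end DescentSequences

section MonotoneVariationalInequality

variable {κ : Type*} [Fintype κ] {g : (κ → ℝ) → κ → ℝ} {S : Set (κ → ℝ)} {a b : κ → ℝ} {β : ℝ}

lemma IsVariationalSolution.dotProduct_nonneg (ha : IsVariationalSolution g S a) (hβ : 0 ≤ β)
    (hg : CocoerciveOn β g S) (hb : b ∈ S) : 0 ≤ g b ⬝ᵥ (b - a) := by
  linarith [ha.2 b hb, hg.dotProduct_nonneg hβ hb ha.1, sub_dotProduct (g b) (g a) (b - a)]

lemma IsVariationalSolution.of_dotProduct_nonpos (ha : IsVariationalSolution g S a) (hβ : 0 < β)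
    (hg : CocoerciveOn β g S) (hb : b ∈ S) (hgap : g b ⬝ᵥ (b - a) ≤ 0) :
    IsVariationalSolution g S b := by
  have heq : g b = g a := hg.eq_of_dotProduct_nonpos hβ hb ha.1 <| by
    rw [sub_dotProduct]
    linarith [ha.2 b hb]
  refine ⟨hb, fun c hc => ?_⟩
  rw [← sub_sub_sub_cancel_right c b a, dotProduct_sub]
  linarith [heq ▸ ha.2 c hc]

end MonotoneVariationalInequality

section EntropicDescent

variable {K W : Type*} [Fintype K] [DecidableEq W] {ω : K → W} {d : W → ℝ}
  {g : (K → ℝ) → K → ℝ} {h : ℕ → ℝ} {f : ℕ → K → ℝ} {a b : K → ℝ} {m : W → ℝ} {β : ℝ}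

lemma CocoerciveOn.sum_mul_sq_sub_le (hg : CocoerciveOn β g (flowPolytope ω d)) (hβ : 0 < β)
    (ha : a ∈ flowPolytope ω d) (hb : b ∈ flowPolytope ω d) :
    ∑ k, b k * (g b k - g a k) ^ 2 ≤ (∑ k, d (ω k)) * β⁻¹ * ((g b - g a) ⬝ᵥ (b - a)) := by
  rw [mul_assoc, sum_mul]
  exact sum_le_sum fun k _ => mul_le_mul (apply_le_of_mem_flowPolytope hb k)
    (hg.sq_sub_le hβ hb ha k) (sq_nonneg _) ((hb.1 k).trans (apply_le_of_mem_flowPolytope hb k))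

lemma exists_sum_mul_sq_le_mul_gap (hβ : 0 < β) (hg : CocoerciveOn β g (flowPolytope ω d))
    (ha : IsVariationalSolution g (flowPolytope ω d) a) (hm : IsWardropPotential ω (g a) a m) :
    ∃ Q, ∀ b ∈ flowPolytope ω d,
      ∑ k, b k * (g b k - m (ω k)) ^ 2 ≤ Q * (g b ⬝ᵥ (b - a)) := by
  set D := (∑ k, d (ω k)) * β⁻¹
  set L := ∑ k, (g a k - m (ω k))
  refine ⟨2 * D + 2 * L, fun b hb => ?_⟩
  have hD : 0 ≤ D := mul_nonneg
    (sum_nonneg fun k _ => (hb.1 k).trans (apply_le_of_mem_flowPolytope hb k)) (inv_nonneg.2 hβ.le)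
  have hL : 0 ≤ L := sum_nonneg fun k _ => sub_nonneg.2 (hm.le k)
  have hmono : 0 ≤ (g b - g a) ⬝ᵥ (b - a) := hg.dotProduct_nonneg hβ.le hb ha.1
  calc ∑ k, b k * (g b k - m (ω k)) ^ 2
      ≤ ∑ k, (2 * (b k * (g b k - g a k) ^ 2) + 2 * (b k * (g a k - m (ω k)) ^ 2)) :=
        sum_le_sum fun k _ => by
          nlinarith [mul_nonneg (hb.1 k) (sq_nonneg (g b k - g a k - (g a k - m (ω k))))]
    _ = 2 * ∑ k, b k * (g b k - g a k) ^ 2 + 2 * ∑ k, b k * (g a k - m (ω k)) ^ 2 := by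
        rw [sum_add_distrib, ← mul_sum, ← mul_sum]
    _ ≤ 2 * (D * ((g b - g a) ⬝ᵥ (b - a))) + 2 * (L * (g a ⬝ᵥ (b - a))) := by
        gcongr
        exacts [hg.sum_mul_sq_sub_le hβ ha.1 hb, hm.sum_mul_sq_le ha.1 hb]
    _ ≤ (2 * D + 2 * L) * ((g b - g a) ⬝ᵥ (b - a) + g a ⬝ᵥ (b - a)) := by
        nlinarith [mul_nonneg hL hmono, mul_nonneg hD (ha.2 b hb)]
    _ = (2 * D + 2 * L) * (g b ⬝ᵥ (b - a)) := by rw [← add_dotProduct, sub_add_cancel]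

/-- `f` is a run of entropic mirror descent on the interior of the flow polytope, with operator `g`
and step sizes `h`. -/
structure IsEntropicDescent (ω : K → W) (d : W → ℝ) (g : (K → ℝ) → K → ℝ) (h : ℕ → ℝ)
    (f : ℕ → K → ℝ) : Prop where
  mem (t : ℕ) : f t ∈ flowPolytope ω d
  pos (t : ℕ) (k : K) : 0 < f t k
  isExpTilt (t : ℕ) : IsExpTilt ω (h t • g (f t)) (f t) (f (t + 1))

namespace IsEntropicDescent

lemma relEntropy_nonneg (hf : IsEntropicDescent ω d g h f) (ha : a ∈ flowPolytope ω d) (t : ℕ) :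
    0 ≤ relEntropy a (f t) :=
  _root_.relEntropy_nonneg ha.1 (hf.pos t) (sum_eq_of_mem_flowPolytope ha (hf.mem t))

lemma relEntropy_succ (hf : IsEntropicDescent ω d g h f) (ha : a ∈ flowPolytope ω d) (t : ℕ) :
    relEntropy a (f (t + 1)) =
      relEntropy a (f t) - h t * (g (f t) ⬝ᵥ (f t - a)) + relEntropy (f t) (f (t + 1)) := by
  rw [(hf.isExpTilt t).relEntropy_eq (fun k => (hf.pos t k).ne') ha (hf.mem t), smul_dotProduct,
    smul_eq_mul]

lemma eventually_relEntropy_succ_le (hf : IsEntropicDescent ω d g h f)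
    (hg : ContinuousOn g (flowPolytope ω d)) (hh : Tendsto h atTop (𝓝 0)) (m : W → ℝ) :
    ∀ᶠ t in atTop, relEntropy (f t) (f (t + 1)) ≤
      h t ^ 2 * ∑ k, f t k * (g (f t) k - m (ω k)) ^ 2 := by
  obtain ⟨C, hC⟩ := isCompact_flowPolytope.exists_bound_of_continuousOn
    (hg.sub (continuousOn_const (c := m ∘ ω)))
  have hsmall : Tendsto (fun t => |h t| * C) atTop (𝓝 0) := by simpa using hh.abs.mul_const C
  filter_upwards [hsmall.eventually_le_const zero_lt_one] with t ht
  have hloss (k : K) : |(h t • g (f t)) k - (h t • m) (ω k)| ≤ 1 :=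
    calc |(h t • g (f t)) k - (h t • m) (ω k)| = |h t| * |(g (f t) - m ∘ ω) k| := by
          rw [← abs_mul]
          simp [mul_sub]
      _ ≤ |h t| * C := by
          gcongr
          exact (norm_le_pi_norm (g (f t) - m ∘ ω) k).trans (hC _ (hf.mem t))
      _ ≤ 1 := ht
  refine ((hf.isExpTilt t).relEntropy_le (hf.pos t) (hf.mem t) (hf.mem (t + 1)) hloss).trans_eq ?_
  rw [mul_sum]
  refine sum_congr rfl fun k _ => ?_
  simp only [Pi.smul_apply, smul_eq_mul]
  ring

lemma relEntropy_succ_isLittleO (hf : IsEntropicDescent ω d g h f)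
    (hg : ContinuousOn g (flowPolytope ω d)) (hh : Tendsto h atTop (𝓝 0)) :
    (fun t => relEntropy (f t) (f (t + 1))) =o[atTop] h := by
  have hcont : ContinuousOn (fun b => ∑ k, b k * (g b k - (0 : W → ℝ) (ω k)) ^ 2)
      (flowPolytope ω d) := by fun_prop
  obtain ⟨C, hC⟩ := isCompact_flowPolytope.exists_bound_of_continuousOn hcont
  have hsq : (fun t => relEntropy (f t) (f (t + 1))) =O[atTop] fun t => h t * h t := by
    refine .of_bound C ?_
    filter_upwards [hf.eventually_relEntropy_succ_le hg hh 0] with t ht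
    rw [Real.norm_of_nonneg (hf.relEntropy_nonneg (hf.mem t) (t + 1)), ← sq,
      Real.norm_of_nonneg (sq_nonneg (h t)), mul_comm]
    exact ht.trans (mul_le_mul_of_nonneg_left ((le_abs_self _).trans (hC _ (hf.mem t)))
      (sq_nonneg _))
  simpa only [one_mul] using
    hsq.trans_isLittleO (((Asymptotics.isLittleO_one_iff ℝ).2 hh).mul_isBigO
      (Asymptotics.isBigO_refl h atTop))

lemma sum_mul_dotProduct_le (hf : IsEntropicDescent ω d g h f) (ha : a ∈ flowPolytope ω d)
    (n : ℕ) : ∑ t ∈ range n, h t * (g (f t) ⬝ᵥ (f t - a)) ≤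
      relEntropy a (f 0) + ∑ t ∈ range n, relEntropy (f t) (f (t + 1)) := by
  have htelescope : ∑ t ∈ range n, h t * (g (f t) ⬝ᵥ (f t - a)) =
      relEntropy a (f 0) - relEntropy a (f n) +
        ∑ t ∈ range n, relEntropy (f t) (f (t + 1)) := by
    rw [← sum_range_sub' (fun t => relEntropy a (f t)), ← sum_add_distrib]
    exact sum_congr rfl fun t _ => by rw [hf.relEntropy_succ ha t]; ring
  linarith [hf.relEntropy_nonneg ha n]

lemma dotProduct_centerMass_sub_le (hf : IsEntropicDescent ω d g h f) (hh : ∀ t, 0 < h t)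
    (hmono : ∀ a ∈ flowPolytope ω d, ∀ b ∈ flowPolytope ω d, 0 ≤ (g a - g b) ⬝ᵥ (a - b))
    (ha : a ∈ flowPolytope ω d) {n : ℕ} (hn : n ≠ 0) :
    g a ⬝ᵥ ((range n).centerMass h f - a) ≤
      (relEntropy a (f 0) + ∑ t ∈ range n, relEntropy (f t) (f (t + 1))) / ∑ t ∈ range n, h t := by
  have hpos : 0 < ∑ t ∈ range n, h t := sum_pos (fun t _ => hh t) (by simpa using hn)
  rw [le_div_iff₀ hpos]
  refine le_trans ?_ (hf.sum_mul_dotProduct_le ha n)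
  calc g a ⬝ᵥ ((range n).centerMass h f - a) * ∑ t ∈ range n, h t
      = ∑ t ∈ range n, h t * (g a ⬝ᵥ (f t - a)) := by
        simp only [centerMass, dotProduct_sub, dotProduct_smul, dotProduct_sum, smul_eq_mul,
          mul_sub, sum_sub_distrib, ← sum_mul]
        field_simp
    _ ≤ ∑ t ∈ range n, h t * (g (f t) ⬝ᵥ (f t - a)) := by
        refine sum_le_sum fun t _ => mul_le_mul_of_nonneg_left ?_ (hh t).le
        linarith [hmono _ (hf.mem t) _ ha, sub_dotProduct (g (f t)) (g a) (f t - a)]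

-- The weighted ergodic averages have vanishing gap, so their limit points solve the Minty problem.
lemma exists_isVariationalSolution (hf : IsEntropicDescent ω d g h f)
    (hg : ContinuousOn g (flowPolytope ω d))
    (hmono : ∀ a ∈ flowPolytope ω d, ∀ b ∈ flowPolytope ω d, 0 ≤ (g a - g b) ⬝ᵥ (a - b))
    (hh : ∀ t, 0 < h t) (hh0 : Tendsto h atTop (𝓝 0))
    (hsum : Tendsto (fun n => ∑ t ∈ range n, h t) atTop atTop) :
    ∃ a, IsVariationalSolution g (flowPolytope ω d) a := by
  have haverage (n : ℕ) : (range (n + 1)).centerMass h f ∈ flowPolytope ω d :=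
    convex_flowPolytope.centerMass_mem (fun t _ => (hh t).le)
      (sum_pos (fun t _ => hh t) nonempty_range_add_one) fun t _ => hf.mem t
  obtain ⟨a, ha, φ, hφ, hlim⟩ := isCompact_flowPolytope.tendsto_subseq haverage
  refine ⟨a, isVariationalSolution_of_forall_dotProduct_nonneg convex_flowPolytope hg ha
    fun b hb => ?_⟩
  have hregret : Tendsto (fun n => (relEntropy b (f 0) +
      ∑ t ∈ range n, relEntropy (f t) (f (t + 1))) / ∑ t ∈ range n, h t) atTop (𝓝 0) := by
    have hlittle := (hf.relEntropy_succ_isLittleO hg hh0).sum_range (fun t => (hh t).le) hsum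
    simpa only [add_div, add_zero] using
      (hsum.const_div_atTop (relEntropy b (f 0))).add hlittle.tendsto_div_nhds_zero
  have hgap : Tendsto (fun n => g b ⬝ᵥ ((range (φ n + 1)).centerMass h f - b)) atTop
      (𝓝 (g b ⬝ᵥ (a - b))) :=
    ((continuous_const.dotProduct (continuous_id.sub continuous_const)).tendsto a).comp hlim
  have hle : g b ⬝ᵥ (a - b) ≤ 0 := le_of_tendsto_of_tendsto' hgap
    (hregret.comp ((tendsto_add_atTop_nat 1).comp hφ.tendsto_atTop))
    fun n => hf.dotProduct_centerMass_sub_le hh hmono hb (φ n).succ_ne_zero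
  rw [← neg_sub a b, dotProduct_neg]
  exact neg_nonneg.2 hle

lemma eventually_relEntropy_succ_le_sub (hf : IsEntropicDescent ω d g h f)
    (hω : Function.Surjective ω) (hβ : 0 < β) (hg : CocoerciveOn β g (flowPolytope ω d))
    (hh : ∀ t, 0 < h t) (hh0 : Tendsto h atTop (𝓝 0))
    (ha : IsVariationalSolution g (flowPolytope ω d) a) :
    ∀ᶠ t in atTop, relEntropy a (f (t + 1)) ≤
      relEntropy a (f t) - h t * (2⁻¹ * (g (f t) ⬝ᵥ (f t - a))) := by
  obtain ⟨m, hm⟩ := ha.exists_isWardropPotential hω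
  obtain ⟨Q, hQ⟩ := exists_sum_mul_sq_le_mul_gap hβ hg ha hm
  have hsmall : Tendsto (fun t => h t * Q) atTop (𝓝 0) := by simpa using hh0.mul_const Q
  filter_upwards [hf.eventually_relEntropy_succ_le (hg.continuousOn hβ) hh0 m,
    hsmall.eventually_le_const (by norm_num : (0 : ℝ) < 2⁻¹)] with t hquad ht
  have hgap : 0 ≤ g (f t) ⬝ᵥ (f t - a) := ha.dotProduct_nonneg hβ.le hg (hf.mem t)
  have hloss : relEntropy (f t) (f (t + 1)) ≤ h t * (2⁻¹ * (g (f t) ⬝ᵥ (f t - a))) :=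
    calc relEntropy (f t) (f (t + 1)) ≤ h t ^ 2 * (Q * (g (f t) ⬝ᵥ (f t - a))) :=
          hquad.trans (mul_le_mul_of_nonneg_left (hQ _ (hf.mem t)) (sq_nonneg _))
      _ = h t * (h t * Q * (g (f t) ⬝ᵥ (f t - a))) := by ring
      _ ≤ h t * (2⁻¹ * (g (f t) ⬝ᵥ (f t - a))) := by
          have := (hh t).le
          gcongr
  rw [hf.relEntropy_succ ha.1 t]
  linarith

theorem exists_isVariationalSolution_tendsto (hf : IsEntropicDescent ω d g h f)
    (hω : Function.Surjective ω) (hβ : 0 < β) (hg : CocoerciveOn β g (flowPolytope ω d))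
    (hh : ∀ t, 0 < h t) (hh0 : Tendsto h atTop (𝓝 0))
    (hsum : Tendsto (fun n => ∑ t ∈ range n, h t) atTop atTop) :
    ∃ b, IsVariationalSolution g (flowPolytope ω d) b ∧ Tendsto f atTop (𝓝 b) := by
  have hcont := hg.continuousOn hβ
  obtain ⟨a, ha⟩ := hf.exists_isVariationalSolution hcont
    (fun a ha b hb => hg.dotProduct_nonneg hβ.le ha hb) hh hh0 hsum
  have hfreq (n : ℕ) : ∃ᶠ t in atTop, 2⁻¹ * (g (f t) ⬝ᵥ (f t - a)) < 1 / ((n : ℝ) + 1) :=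
    frequently_lt_of_eventually_descent (hf.relEntropy_nonneg ha.1) (fun t => (hh t).le) hsum
      (hf.eventually_relEntropy_succ_le_sub hω hβ hg hh hh0 ha) Nat.one_div_pos_of_nat
  obtain ⟨φ, hφ, hgap⟩ := extraction_forall_of_frequently hfreq
  obtain ⟨b, hb, ψ, hψ, hlim⟩ := isCompact_flowPolytope.tendsto_subseq fun n => hf.mem (φ n)
  have hgap_lim : Tendsto (fun n => 2⁻¹ * (g (f (φ (ψ n))) ⬝ᵥ (f (φ (ψ n)) - a))) atTop
      (𝓝 (2⁻¹ * (g b ⬝ᵥ (b - a)))) := by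
    have hpair : ContinuousOn (fun x => 2⁻¹ * (g x ⬝ᵥ (x - a))) (flowPolytope ω d) := by
      unfold dotProduct
      fun_prop
    exact (hpair b hb).tendsto.comp
      (tendsto_nhdsWithin_iff.2 ⟨hlim, Eventually.of_forall fun n => hf.mem _⟩)
  have hgap_nonpos : 2⁻¹ * (g b ⬝ᵥ (b - a)) ≤ 0 := le_of_tendsto_of_tendsto' hgap_lim
    (tendsto_one_div_add_atTop_nhds_zero_nat.comp hψ.tendsto_atTop) fun n => (hgap (ψ n)).le
  have hbvar : IsVariationalSolution g (flowPolytope ω d) b :=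
    ha.of_dotProduct_nonpos hβ hg hb (by linarith)
  refine ⟨b, hbvar, tendsto_of_tendsto_relEntropy_zero hb.1 hf.pos
    (fun t => sum_eq_of_mem_flowPolytope hb (hf.mem t)) ?_⟩
  refine tendsto_of_eventually_succ_le_of_subseq ?_ (hφ.comp hψ).tendsto_atTop
    (tendsto_relEntropy_zero hlim)
  filter_upwards [hf.eventually_relEntropy_succ_le_sub hω hβ hg hh hh0 hbvar] with t ht
  have hgap_nonneg : 0 ≤ g (f t) ⬝ᵥ (f t - b) := hbvar.dotProduct_nonneg hβ.le hg (hf.mem t)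
  exact ht.trans (sub_le_self _ (by have := hh t; positivity))

end IsEntropicDescent

end EntropicDescent

section RoutingGame

variable {E K W : Type*} {ω : K → W} {d : W → ℝ}

lemma tendsto_of_tendsto_comp_mul {α : Type*} {l : Filter α} {p : α → K → ℝ} {q : K → ℝ}
    (hd : ∀ w, 0 < d w) (hp : Tendsto (fun t => (d ∘ ω) * p t) l (𝓝 ((d ∘ ω) * q))) :
    Tendsto p l (𝓝 q) := by
  refine tendsto_pi_nhds.2 fun k => ?_
  have hk := (tendsto_pi_nhds.1 hp k).div_const (d (ω k))
  simpa only [Pi.mul_apply, Function.comp_apply, mul_div_cancel_left₀ _ (hd (ω k)).ne'] using hk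

variable [Fintype K] [DecidableEq W]

/-- The costs of the routes under the route flow `f`, where `Λ` is the link-route incidence matrix
and `u` the link cost. -/
def routeCost [Fintype E] (Λ : Matrix E K ℝ) (u : (E → ℝ) → E → ℝ) (f : K → ℝ) : K → ℝ :=
  Λᵀ *ᵥ u (Λ *ᵥ f)

lemma exists_cocoerciveOn_routeCost [Fintype E] {Λ : Matrix E K ℝ} {u : (E → ℝ) → E → ℝ}
    {U : Set (E → ℝ)} (hU : IsOpen U) (hXU : Λ.mulVec '' flowPolytope ω d ⊆ U)
    (hu : ContDiffOn ℝ 1 u U)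
    (hpos : ∀ x ∈ Λ.mulVec '' flowPolytope ω d, ∀ v, 0 ≤ fderiv ℝ u x v ⬝ᵥ v)
    (hpos2 : ∀ x ∈ Λ.mulVec '' flowPolytope ω d, ∀ v,
      0 ≤ fderiv ℝ u x (fderiv ℝ u x v) ⬝ᵥ v) :
    ∃ β > 0, CocoerciveOn β (routeCost Λ u) (flowPolytope ω d) := by
  have hconv : Convex ℝ (Λ.mulVec '' flowPolytope ω d) :=
    convex_flowPolytope.linear_image Λ.mulVecLin
  have hcomp : IsCompact (Λ.mulVec '' flowPolytope ω d) :=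
    isCompact_flowPolytope.image (by fun_prop)
  obtain ⟨β, hβ, hcoco⟩ := exists_cocoerciveOn_of_fderiv hU hXU hu hconv hcomp hpos hpos2
  exact hcoco.transpose_comp hβ

lemma isEntropicDescent_logitFlow {g : (K → ℝ) → K → ℝ} {h : ℕ → ℝ} {v : ℕ → K → ℝ}
    (hω : Function.Surjective ω) (hd : ∀ w, 0 < d w)
    (hv : ∀ t, v (t + 1) = v t - h t • g (logitFlow ω d (v t))) :
    IsEntropicDescent ω d g h fun t => logitFlow ω d (v t) where
  mem t := logitFlow_mem_flowPolytope hω hd (v t)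
  pos t := logitFlow_pos hd (v t)
  isExpTilt t := hv t ▸ isExpTilt_logitFlow (v t) _

lemma comp_mul_mem_flowPolytope_iff (hd : ∀ w, 0 < d w) {p : K → ℝ} :
    (d ∘ ω) * p ∈ flowPolytope ω d ↔ p ∈ flowPolytope ω 1 := by
  refine and_congr (forall_congr' fun k => mul_nonneg_iff_of_pos_left (hd (ω k)))
    (forall_congr' fun w => ?_)
  have hfiber : ∑ k with ω k = w, ((d ∘ ω) * p) k = d w * ∑ k with ω k = w, p k := by
    rw [mul_sum]
    exact sum_congr rfl fun k hk => by
      rw [Pi.mul_apply, Function.comp_apply, (mem_filter.1 hk).2]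
  rw [hfiber, mul_eq_left₀ (hd w).ne', Pi.one_apply]

lemma comp_mul_image_flowPolytope (hd : ∀ w, 0 < d w) :
    (fun p : K → ℝ => (d ∘ ω) * p) '' flowPolytope ω 1 = flowPolytope ω d := by
  refine Set.Subset.antisymm (Set.image_subset_iff.2 fun p => (comp_mul_mem_flowPolytope_iff hd).2)
    fun f hf => ?_
  have hscale : (d ∘ ω) * (f / (d ∘ ω)) = f :=
    funext fun k => mul_div_cancel₀ _ (hd (ω k)).ne'
  exact ⟨f / (d ∘ ω), (comp_mul_mem_flowPolytope_iff hd).1 (hscale.symm ▸ hf), hscale⟩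

lemma IsVariationalSolution.of_comp_mul {g : (K → ℝ) → K → ℝ} (hω : Function.Surjective ω)
    (hd : ∀ w, 0 < d w) {p : K → ℝ}
    (hp : IsVariationalSolution g (flowPolytope ω d) ((d ∘ ω) * p)) :
    IsVariationalSolution (fun q => g ((d ∘ ω) * q)) (flowPolytope ω 1) p := by
  obtain ⟨m, hm⟩ := hp.exists_isWardropPotential hω
  have hunit : IsWardropPotential ω (g ((d ∘ ω) * p)) p m := by
    refine ⟨hm.le, fun k => ?_⟩
    have hk := hm.mul_sub_eq_zero k
    rw [Pi.mul_apply, mul_assoc] at hk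
    exact (mul_eq_zero.1 hk).resolve_left (hd (ω k)).ne'
  exact hunit.isVariationalSolution (g := fun q => g ((d ∘ ω) * q))
    ((comp_mul_mem_flowPolytope_iff hd).1 hp.1)

end RoutingGame

theorem stmt_7_general
    {W K E : Type*} [Fintype K] [Fintype E] [DecidableEq W] [DecidableEq E]
    (ω : K → W) (hω : Function.Surjective ω)
    (Λ : E → K → ℝ)
    (d : W → ℝ) (hd : ∀ w, 0 < d w)
    (u : (E → ℝ) → (E → ℝ))
    (P : Set (K → ℝ))
    (hP : P = {p : K → ℝ | (∀ k, 0 ≤ p k) ∧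
      ∀ w, ∑ k ∈ Finset.univ.filter (fun k => ω k = w), p k = 1})
    (Λbar : E → K → ℝ) (hΛbar : ∀ e k, Λbar e k = d (ω k) * Λ e k)
    (c : (K → ℝ) → K → ℝ)
    (hc : ∀ p k, c p k = ∑ e, Λ e k * u (fun e' => ∑ k', Λbar e' k' * p k') e)
    (X : Set (E → ℝ)) (hX : X = (fun p e => ∑ k, Λbar e k * p k) '' P)
    (hu1 : ∃ U : Set (E → ℝ), IsOpen U ∧ X ⊆ U ∧ ContDiffOn ℝ 1 u U)
    (hu2 : ∀ x ∈ X,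
      (∀ v : E → ℝ, 0 ≤ ∑ i, ∑ j, v i * (fderiv ℝ u x (Pi.single j (1 : ℝ)) i) * v j) ∧
      (∀ v : E → ℝ, 0 ≤ ∑ i, ∑ j,
        v i * (∑ m, fderiv ℝ u x (Pi.single m (1 : ℝ)) i *
          fderiv ℝ u x (Pi.single j (1 : ℝ)) m) * v j))
    (q : ℝ → (K → ℝ) → K → ℝ)
    (hq : ∀ (rr : ℝ) (ss : K → ℝ) (k : K),
      q rr ss k = Real.exp (-rr * ss k) /
        ∑ k' ∈ Finset.univ.filter (fun k' => ω k' = ω k), Real.exp (-rr * ss k'))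
    (Pstar : Set (K → ℝ))
    (hPstar : Pstar = {ps ∈ P | ∀ pp ∈ P, 0 ≤ ∑ k, c ps k * (pp k - ps k)})
    (r : ℝ) (hr : 0 < r)
    (η : ℕ → ℝ) (hη : ∀ t, 0 < η t)
    (s : ℕ → K → ℝ) (p : ℕ → K → ℝ)
    (hp : ∀ t, p t = q r (s t))
    (hs : ∀ t, s (t + 1) = fun k => s t k + η t * c (p t) k)
    (hη0 : Tendsto η atTop (nhds 0))
    (hηsum : Tendsto (fun t => ∑ i ∈ Finset.range (t + 1), η i) atTop atTop) :
    ∃ pstar ∈ Pstar, Tendsto p atTop (nhds pstar) := by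
  obtain ⟨U, hU, hXU, hu⟩ := hu1
  set scale : (K → ℝ) → K → ℝ := fun p => (d ∘ ω) * p
  have hlink (p : K → ℝ) : (fun e => ∑ k, Λbar e k * p k) = Matrix.of Λ *ᵥ scale p :=
    funext fun e => sum_congr rfl fun k _ => by
      rw [hΛbar, mul_comm (d (ω k)), mul_assoc]
      rfl
  have hcost : c = fun p => routeCost (Matrix.of Λ) u (scale p) := by
    ext p k
    rw [hc, hlink]
    rfl
  have hloads : X = (Matrix.of Λ).mulVec '' flowPolytope ω d := by
    rw [← comp_mul_image_flowPolytope hd, Set.image_image, hX, hP]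
    exact Set.image_congr fun p _ => hlink p
  obtain ⟨β, hβ, hcoco⟩ := exists_cocoerciveOn_routeCost hU (hloads ▸ hXU) hu
    (fun x hx v => (sum_sum_apply_single_eq_dotProduct _ v).subst ((hu2 x (hloads ▸ hx)).1 v))
    (fun x hx v => (sum_sum_sum_apply_single_eq_dotProduct _ v).subst ((hu2 x (hloads ▸ hx)).2 v))
  have hlogit (t : ℕ) : scale (p t) = logitFlow ω d (-r • s t) := by
    ext k
    simp [scale, hp, hq, logitFlow]
  have hstep (t : ℕ) : -r • s (t + 1) =
      -r • s t - (r • η) t • routeCost (Matrix.of Λ) u (logitFlow ω d (-r • s t)) := by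
    ext k
    simp only [hs, ← hlogit, hcost, Pi.smul_apply, Pi.sub_apply, smul_eq_mul]
    ring
  have hsum : Tendsto (fun n => ∑ t ∈ range n, (r • η) t) atTop atTop := by
    simpa only [Pi.smul_apply, smul_eq_mul, ← mul_sum] using
      ((tendsto_add_atTop_iff_nat (f := fun n => ∑ t ∈ range n, η t) 1).1 hηsum).const_mul_atTop hr
  obtain ⟨f, hf, hlim⟩ :=
    (isEntropicDescent_logitFlow (h := r • η) (v := fun t => -r • s t) hω hd
      hstep).exists_isVariationalSolution_tendsto hω hβ hcoco
      (fun t => mul_pos hr (hη t)) (smul_zero (A := ℝ) r ▸ hη0.const_smul r) hsum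
  obtain ⟨pstar, -, rfl⟩ := (comp_mul_image_flowPolytope hd).superset hf.1
  refine ⟨pstar, ?_, tendsto_of_tendsto_comp_mul hd (hlim.congr fun t => (hlogit t).symm)⟩
  rw [hPstar, hP, hcost]
  exact hf.of_comp_mul hω hd

theorem stmt_7
    {W K E : Type*} [Fintype W] [Fintype K] [Fintype E]
    [DecidableEq W] [DecidableEq E]
    [Nonempty W] [Nonempty K]
    (ω : K → W) (hω : Function.Surjective ω)
    (Λ : E → K → ℝ) (hΛ : ∀ e k, Λ e k = 0 ∨ Λ e k = 1)
    (d : W → ℝ) (hd : ∀ w, 0 < d w)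
    (u : (E → ℝ) → (E → ℝ))
    (P : Set (K → ℝ))
    (hP : P = {p : K → ℝ | (∀ k, 0 ≤ p k) ∧
      ∀ w, ∑ k ∈ Finset.univ.filter (fun k => ω k = w), p k = 1})
    (Λbar : E → K → ℝ) (hΛbar : ∀ e k, Λbar e k = d (ω k) * Λ e k)
    (c : (K → ℝ) → K → ℝ)
    (hc : ∀ p k, c p k = ∑ e, Λ e k * u (fun e' => ∑ k', Λbar e' k' * p k') e)
    (X : Set (E → ℝ)) (hX : X = (fun p e => ∑ k, Λbar e k * p k) '' P)
    (hu1 : ∃ U : Set (E → ℝ), IsOpen U ∧ X ⊆ U ∧ ContDiffOn ℝ 2 u U)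
    (hu2 : ∀ x ∈ X,
      (∀ v : E → ℝ, 0 ≤ ∑ i, ∑ j, v i * (fderiv ℝ u x (Pi.single j (1 : ℝ)) i) * v j) ∧
      (∀ v : E → ℝ, 0 ≤ ∑ i, ∑ j,
        v i * (∑ m, fderiv ℝ u x (Pi.single m (1 : ℝ)) i *
          fderiv ℝ u x (Pi.single j (1 : ℝ)) m) * v j))
    (q : ℝ → (K → ℝ) → K → ℝ)
    (hq : ∀ (rr : ℝ) (ss : K → ℝ) (k : K),
      q rr ss k = Real.exp (-rr * ss k) /
        ∑ k' ∈ Finset.univ.filter (fun k' => ω k' = ω k), Real.exp (-rr * ss k'))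
    (Pstar : Set (K → ℝ))
    (hPstar : Pstar = {ps ∈ P | ∀ pp ∈ P, 0 ≤ ∑ k, c ps k * (pp k - ps k)})
    (r : ℝ) (hr : 0 < r)
    (η : ℕ → ℝ) (hη : ∀ t, 0 < η t)
    (s : ℕ → K → ℝ) (p : ℕ → K → ℝ)
    (hp : ∀ t, p t = q r (s t))
    (hs : ∀ t, s (t + 1) = fun k => s t k + η t * c (p t) k)
    (hη0 : Tendsto η atTop (nhds 0))
    (hηsum : Tendsto (fun t => ∑ i ∈ Finset.range (t + 1), η i) atTop atTop) :
    ∃ pstar ∈ Pstar, Tendsto p atTop (nhds pstar) := by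
  obtain ⟨U, hU, hXU, hu⟩ := hu1
  exact stmt_7_general ω hω Λ d hd u P hP Λbar hΛbar c hc X hX
    ⟨U, hU, hXU, hu.of_le one_le_two⟩ hu2 q hq Pstar hPstar r hr η hη s p hp hs hη0 hηsum
end
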